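/- Let φ : X → Y be a finitely monotone continuous surjection from an unshielded planar compactum X onto a finitely Suslinian compactum Y. If C ⊂ X is a limit continuum, then φ(C) is a single point. -/

import Mathlib

/-!
Suppose that `φ` takes distinct values at two points of the limit continuum `C`. The images of the
disjoint continua converging to `C` come close to both values, so by boundary bumping each of them
contains a continuum of diameter bounded from below near either value. As `Y` is finitely Suslinian,
some continuum near either value meets infinitely many of these images, and as `φ` is finitely
monotone, so does a single component of its preimage. This gives disjoint continua `K₁` and `K₂` in
`X` and three disjoint continua in `X` meeting both of them. All five lie on the boundary of the
unbounded component `U` of `ℂ \ X`, so small perturbations of the three continua can also be joined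
to a compact path connected subset of `U`, which results in a drawing of `K₃,₃` in the plane.

The nonplanarity of `K₃,₃` is proved with logarithms: the difference of two disjoint paths has a
continuous logarithm on the square, and comparing the changes of these logarithms along the sides
of the squares for all pairs of disjoint edges contradicts `p - q = -(q - p)`.
-/

open Set Filter Metric Topology Function

/-- A relation on a topological space is closed if its graph is closed. -/
def ClosedRel {Y : Type*} [TopologicalSpace Y] (r : Y → Y → Prop) : Prop :=
  IsClosed {p : Y × Y | r p.1 p.2}

/-- A relation respects a family `A` of subsets if it is closed and each member of `A`
is contained in a single class. -/
def Respects {Y : Type*} [TopologicalSpace Y] (A : Set (Set Y)) (r : Y → Y → Prop) : Prop :=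
  ClosedRel r ∧ ∀ a ∈ A, ∀ x ∈ a, ∀ y ∈ a, r x y

/-- The finest closed equivalence relation respecting `A`: the intersection of all
closed equivalence relations respecting `A`. -/
def finestRel {Y : Type*} [TopologicalSpace Y] (A : Set (Set Y)) : Y → Y → Prop :=
  fun x y => ∀ r : Y → Y → Prop, Equivalence r → Respects A r → r x y

/-- A limit continuum: a subcontinuum which is the Hausdorff limit of a sequence of
pairwise disjoint subcontinua. -/
def IsLimCont {Y : Type*} [MetricSpace Y] (C : Set Y) : Prop :=
  IsCompact C ∧ IsConnected C ∧
  ∃ F : ℕ → Set Y, (∀ n, IsCompact (F n) ∧ IsConnected (F n)) ∧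
    Pairwise (Disjoint on F) ∧
    Tendsto (fun n => EMetric.hausdorffEdist (F n) C) atTop (nhds 0)

/-- Finitely Suslinian: every family of pairwise disjoint subcontinua of diameter at least
`ε > 0` is finite. -/
def FinSus (Y : Type*) [MetricSpace Y] : Prop :=
  ∀ ε : ℝ, 0 < ε → ∀ S : Set (Set Y),
    (∀ C ∈ S, IsCompact C ∧ IsConnected C ∧ ε ≤ Metric.diam C) →
    S.Pairwise Disjoint → S.Finite

/-- A subcontinuum of the subset `Z`. -/
def SubcontIn {E : Type*} [MetricSpace E] (Z C : Set E) : Prop :=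
  C ⊆ Z ∧ IsCompact C ∧ IsConnected C

/-- A limit continuum of the subset `Z`. -/
def LimContIn {E : Type*} [MetricSpace E] (Z C : Set E) : Prop :=
  SubcontIn Z C ∧ ∃ F : ℕ → Set E, (∀ n, SubcontIn Z (F n)) ∧
    Pairwise (Disjoint on F) ∧
    Tendsto (fun n => EMetric.hausdorffEdist (F n) C) atTop (nhds 0)

/-- The subset `Z` is finitely Suslinian. -/
def FinSusIn {E : Type*} [MetricSpace E] (Z : Set E) : Prop :=
  ∀ ε : ℝ, 0 < ε → ∀ S : Set (Set E),
    (∀ C ∈ S, SubcontIn Z C ∧ ε ≤ Metric.diam C) → S.Pairwise Disjoint → S.Finite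

/-- A planar compactum is unshielded if it is the boundary of the unbounded component of
its complement. -/
def Unshielded (X : Set ℂ) : Prop :=
  ∀ z, z ∉ X → ¬Bornology.IsBounded (connectedComponentIn Xᶜ z) →
    X = frontier (connectedComponentIn Xᶜ z)

/-! ### Nonplanarity of the complete bipartite graph `K₃,₃` -/

instance : ContractibleSpace unitInterval := (convex_Icc 0 1).contractibleSpace ⟨0, by simp⟩

instance : LocallyPathConnectedSpace unitInterval := (convex_Icc 0 1).locallyPathConnectedSpace

lemma exists_continuous_exp_eq {A : Type*} [TopologicalSpace A] [SimplyConnectedSpace A]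
    [LocallyPathConnectedSpace A] {f : A → ℂ} (hf : Continuous f) (h0 : ∀ a, f a ≠ 0) :
    ∃ L : A → ℂ, Continuous L ∧ ∀ a, Complex.exp (L a) = f a := by
  obtain ⟨a₀⟩ : Nonempty A := inferInstance
  obtain ⟨L, ⟨-, hL⟩, -⟩ := Complex.isCoveringMapOn_exp.existsUnique_continuousMap_lifts
    ⟨f, hf⟩ (Complex.exp_log (h0 a₀)) h0
  exact ⟨L, L.continuous, congrFun hL⟩

open Classical in
/-- The change `L 1 - L 0` of a continuous logarithm `L` along the path `p` in `ℂ \ {0}`, that is,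
`∫ dz / z` along `p`. It is `0` by convention if `p` has no continuous logarithm. -/
noncomputable def logChange (p : unitInterval → ℂ) : ℂ :=
  if h : ∃ L : unitInterval → ℂ, Continuous L ∧ ∀ t, Complex.exp (L t) = p t then
    h.choose 1 - h.choose 0
  else 0

lemma logChange_eq {p L : unitInterval → ℂ} (hL : Continuous L)
    (h : ∀ t, Complex.exp (L t) = p t) : logChange p = L 1 - L 0 := by
  have hex : ∃ L : unitInterval → ℂ, Continuous L ∧ ∀ t, Complex.exp (L t) = p t := ⟨L, hL, h⟩
  rw [logChange, dif_pos hex]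
  obtain ⟨hM, hMp⟩ := hex.choose_spec
  set M := hex.choose
  have heq : (fun t => M t + (L 0 - M 0)) = L := by
    refine Complex.isCoveringMap_exp.eq_of_comp_eq (by fun_prop) hL ?_ 0 (by simp)
    ext t
    have h0 : p 0 ≠ 0 := h 0 ▸ Complex.exp_ne_zero _
    simp [Complex.exp_add, Complex.exp_sub, hMp, h, h0]
  rw [← congrFun heq 1]
  ring

lemma exp_logChange {p : unitInterval → ℂ} (hp : Continuous p) (h0 : ∀ t, p t ≠ 0) :
    Complex.exp (logChange p) = p 1 / p 0 := by
  obtain ⟨L, hL, h⟩ := exists_continuous_exp_eq hp h0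
  rw [logChange_eq hL h, Complex.exp_sub, h, h]

/-- The difference of two disjoint paths has a logarithm on the whole square, whose changes along
the four sides add up to `0`. -/
lemma logChange_sub_add_logChange_sub {p q : unitInterval → ℂ} (hp : Continuous p)
    (hq : Continuous q) (hpq : Disjoint (range p) (range q)) :
    logChange (fun s => p s - q 0) + logChange (fun t => q t - p 1) =
      logChange (fun t => q t - p 0) + logChange (fun s => p s - q 1) := by
  obtain ⟨L, hL, h⟩ := exists_continuous_exp_eq
    (f := fun x : unitInterval × unitInterval => p x.1 - q x.2) (by fun_prop)
    fun x => sub_ne_zero.2 (hpq.ne_of_mem (mem_range_self _) (mem_range_self _))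
  have change_fst (t) : logChange (fun s => p s - q t) = L (1, t) - L (0, t) :=
    logChange_eq (L := fun s => L (s, t)) (by fun_prop) fun s => h (s, t)
  have change_snd (s) : logChange (fun t => q t - p s) = L (s, 1) - L (s, 0) := by
    rw [logChange_eq (L := fun t => L (s, t) + Real.pi * Complex.I) (by fun_prop)]
    · ring
    · intro t
      rw [Complex.exp_add, Complex.exp_pi_mul_I, h]
      ring
  rw [change_fst, change_fst, change_snd, change_snd]
  ring

section CompleteBipartite

variable {ι : Type*} {f : ι → ℂ} {k : Fin 3 → ℂ}

/-- Solving the relations of `logChange_sub_add_logChange_sub` for the pairs of edges at `f i` and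
`f j` yields a coboundary: its potential `S i` only involves the edges at `f i`. -/
lemma exists_logChange_sub_logChange_eq_sub (e : ∀ i a, Path (f i) (k a))
    (he : ∀ i j a b, i ≠ j → a ≠ b → Disjoint (range (e i a)) (range (e j b))) :
    ∃ S : ι → ℂ, ∀ i j, i ≠ j →
      logChange (fun s => e i 0 s - f j) - logChange (fun s => e j 0 s - f i) = S i - S j := by
  let W (i : ι) (a b : Fin 3) : ℂ := logChange fun s => e i a s - k b
  refine ⟨fun i => (W i 0 1 + W i 1 0 + W i 0 2 + W i 2 0 - W i 1 2 - W i 2 1) / 2,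
    fun i j hij => ?_⟩
  have hsq (a b : Fin 3) (hab : a ≠ b) :
      logChange (fun s => e i a s - f j) + W j b a =
        logChange (fun s => e j b s - f i) + W i a b := by
    simpa using logChange_sub_add_logChange_sub (e i a).continuous (e j b).continuous
      (he i j a b hij hab)
  linear_combination (hsq 0 1 (by decide) + hsq 1 0 (by decide) + hsq 0 2 (by decide)
    + hsq 2 0 (by decide) - hsq 1 2 (by decide) - hsq 2 1 (by decide)) / 2

lemma exists_not_disjoint_range_of_completeBipartite {f : Fin 3 → ℂ}
    (e : ∀ i a, Path (f i) (k a)) :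
    ∃ i j a b, i ≠ j ∧ a ≠ b ∧ ¬ Disjoint (range (e i a)) (range (e j b)) := by
  by_contra! he
  obtain ⟨S, hS⟩ := exists_logChange_sub_logChange_eq_sub e he
  have hne {i j a b} (hij : i ≠ j) (hab : a ≠ b) (s t) : e i a s - e j b t ≠ 0 :=
    sub_ne_zero.2 ((he i j a b hij hab).ne_of_mem (mem_range_self s) (mem_range_self t))
  have hff {i j} (hij : i ≠ j) : f i - f j ≠ 0 := by
    simpa using hne hij (show (0 : Fin 3) ≠ 1 by decide) 0 0
  have hkf (i) : k 0 - f i ≠ 0 := by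
    simpa using hne (show i + 1 ≠ i by simp) (show (0 : Fin 3) ≠ 1 by decide) 1 0
  have hexp {i j} (hij : i ≠ j) :
      Complex.exp (logChange fun s => e i 0 s - f j) = (k 0 - f j) / (f i - f j) := by
    simpa using exp_logChange (p := fun s => e i 0 s - f j) (by fun_prop) fun s => by
      simpa using hne hij (show (0 : Fin 3) ≠ 1 by decide) s 0
  let c (i : Fin 3) : ℂ := Complex.exp (S i) * (k 0 - f i)
  have hc {i j} (hij : i ≠ j) : c i = -c j := by
    have h := congrArg Complex.exp (hS i j hij)
    rw [Complex.exp_sub, Complex.exp_sub, hexp hij, hexp hij.symm, ← neg_sub (f i) (f j)] at h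
    have := hff hij
    have := hkf i
    have := hkf j
    have := Complex.exp_ne_zero (S j)
    field_simp at h
    simp only [c]
    linear_combination -h
  have h01 := hc (show (0 : Fin 3) ≠ 1 by decide)
  have h12 := hc (show (1 : Fin 3) ≠ 2 by decide)
  have h02 := hc (show (0 : Fin 3) ≠ 2 by decide)
  have h0 : c 0 = 0 := by linear_combination (h01 - h12 + h02) / 2
  exact mul_ne_zero (Complex.exp_ne_zero _) (hkf 0) h0

end CompleteBipartite

/-- Three disjoint tripods with feet in `V 0`, `V 1`, `V 2` would draw `K₃,₃` in the plane. -/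
lemma exists_forall_not_joinedIn_diff {V W : Fin 3 → Set ℂ} (hV : Pairwise (Disjoint on V))
    (hVc : ∀ a, IsPathConnected (V a)) (hW : Pairwise (Disjoint on W)) (m : Fin 3 → ℂ) :
    ∃ i a, ∀ z ∈ V a, ¬ JoinedIn (W i \ ⋃ b ≠ a, V b) (m i) z := by
  by_contra! h
  choose k hkV using fun a => (hVc a).nonempty
  have hjoin (i a) : JoinedIn ((W i \ ⋃ b ≠ a, V b) ∪ V a) (m i) (k a) := by
    obtain ⟨z, hz, hmz⟩ := h i a
    exact (hmz.mono subset_union_left).trans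
      (((hVc a).joinedIn z hz (k a) (hkV a)).mono subset_union_right)
  obtain ⟨i, j, a, b, hij, hab, hmeet⟩ :=
    exists_not_disjoint_range_of_completeBipartite fun i a => (hjoin i a).somePath
  have hWV (i) {a b : Fin 3} (hab : a ≠ b) : Disjoint (W i \ ⋃ c ≠ a, V c) (V b) :=
    disjoint_sdiff_left.mono_right (subset_biUnion_of_mem (u := V) hab.symm)
  refine hmeet (Disjoint.mono (range_subset_iff.2 (hjoin i a).somePath_mem)
    (range_subset_iff.2 (hjoin j b).somePath_mem) ?_)
  rw [disjoint_union_left, disjoint_union_right, disjoint_union_right]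
  exact ⟨⟨(hW hij).mono sdiff_subset sdiff_subset, hWV i hab⟩, (hWV j hab.symm).symm, hV hab⟩

lemma not_forall_joinedIn_diff_union {A B C : Set ℂ} {W : Fin 3 → Set ℂ} (hAB : Disjoint A B)
    (hAC : Disjoint A C) (hBC : Disjoint B C) (hA : IsPathConnected A) (hB : IsPathConnected B)
    (hC : IsPathConnected C) (hW : Pairwise (Disjoint on W)) (m : Fin 3 → ℂ) :
    ¬ ∀ i, (∃ z ∈ A, JoinedIn (W i \ (B ∪ C)) (m i) z) ∧
      (∃ z ∈ B, JoinedIn (W i \ (A ∪ C)) (m i) z) ∧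
      ∃ z ∈ C, JoinedIn (W i \ (A ∪ B)) (m i) z := by
  intro h
  let V : Fin 3 → Set ℂ := ![A, B, C]
  have hV : Pairwise (Disjoint on V) := by
    simp [V, Pairwise, Fin.forall_fin_succ, onFun, hAB, hAC, hBC, hAB.symm, hAC.symm, hBC.symm]
  have hVc (a) : IsPathConnected (V a) := by
    fin_cases a
    exacts [hA, hB, hC]
  obtain ⟨i, a, hia⟩ := exists_forall_not_joinedIn_diff hV hVc hW m
  obtain ⟨⟨z₀, hz₀, h₀⟩, ⟨z₁, hz₁, h₁⟩, z₂, hz₂, h₂⟩ := h i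
  fin_cases a
  · refine hia z₀ hz₀ (h₀.mono (sdiff_subset_sdiff_right ?_))
    simp [V, iUnion_subset_iff, Fin.forall_fin_succ]
  · refine hia z₁ hz₁ (h₁.mono (sdiff_subset_sdiff_right ?_))
    simp [V, iUnion_subset_iff, Fin.forall_fin_succ]
  · refine hia z₂ hz₂ (h₂.mono (sdiff_subset_sdiff_right ?_))
    simp [V, iUnion_subset_iff, Fin.forall_fin_succ]

/-! ### Continua on the boundary of a path connected planar set -/

lemma exists_zero_joinedIn_diff {Z : Type*} [TopologicalSpace Z] {S A B : Set Z} {x y : Z}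
    (h : JoinedIn S x y) (hA : IsClosed A) (hB : IsClosed B) (hx : x ∈ A) (hy : y ∈ B)
    {g : Z → ℝ} (hg : Continuous g) (hgA : ∀ z ∈ A, g z < 0) (hgB : ∀ z ∈ B, 0 < g z) :
    ∃ m, g m = 0 ∧ (∃ a ∈ A, JoinedIn (S \ B) m a) ∧ ∃ b ∈ B, JoinedIn (S \ A) m b := by
  obtain ⟨γ, hγS⟩ := h
  obtain ⟨s, hsA, hs⟩ := (hA.preimage γ.continuous).isCompact.exists_isGreatest ⟨0, by simpa⟩
  have hs1 : s ≤ 1 := unitInterval.le_one'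
  obtain ⟨t, ⟨hst, htB⟩, ht⟩ := (isClosed_Ici.inter
    (hB.preimage γ.continuous)).isCompact.exists_isLeast (s := Ici s ∩ γ ⁻¹' B)
    ⟨1, hs1, by simpa⟩
  obtain ⟨r, ⟨hsr, hrt⟩, hr⟩ := intermediate_value_Icc hst
    (hg.comp γ.continuous).continuousOn ⟨(hgA _ hsA).le, (hgB _ htB).le⟩
  have joinedIn_subpath {T : Set Z} {u v : unitInterval} (hT : γ '' uIcc u v ⊆ T) :
      JoinedIn T (γ u) (γ v) :=
    ⟨γ.subpath u v, fun τ => hT (γ.range_subpath u v ▸ mem_range_self τ)⟩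
  refine ⟨γ r, hr, ⟨γ s, hsA, joinedIn_subpath ?_⟩, γ t, htB, joinedIn_subpath ?_⟩
  · rintro _ ⟨τ, hτ, rfl⟩
    rw [uIcc_of_ge hsr] at hτ
    refine ⟨hγS τ, fun hτB => (hgB _ hτB).ne' ?_⟩
    rwa [(hτ.2.trans hrt).antisymm (ht ⟨hτ.1, hτB⟩),
      ← hrt.antisymm ((ht ⟨hτ.1, hτB⟩).trans hτ.2)]
  · rintro _ ⟨τ, hτ, rfl⟩
    rw [uIcc_of_le hrt] at hτ
    refine ⟨hγS τ, fun hτA => (hgA _ hτA).ne ?_⟩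
    rwa [(hs hτA).antisymm (hsr.trans hτ.1), hsr.antisymm (hτ.1.trans (hs hτA))]

section NormedSpace

variable {E : Type*} [SeminormedAddCommGroup E] [NormedSpace ℝ E]

lemma isPathConnected_thickening {s : Set E} (hs : IsConnected s) {ε : ℝ} (hε : 0 < ε) :
    IsPathConnected (thickening ε s) := by
  rw [← isOpen_thickening.isConnected_iff_isPathConnected, ← add_ball_zero, ← image2_add,
    ← image_prod]
  exact (hs.prod ((convex_ball (0 : E) ε).isConnected ⟨0, by simpa⟩)).image _ (by fun_prop)

lemma isPathConnected_cthickening {K : Set E} (hK : IsCompact K) (hKc : IsConnected K) {ε : ℝ}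
    (hε : 0 < ε) : IsPathConnected (cthickening ε K) := by
  refine isPathConnected_iff.2 ⟨hKc.nonempty.mono (self_subset_cthickening K), ?_⟩
  have exists_joinedIn (x) (hx : x ∈ cthickening ε K) :
      ∃ k ∈ K, JoinedIn (cthickening ε K) x k := by
    rw [hK.cthickening_eq_biUnion_closedBall hε.le] at hx
    obtain ⟨k, hk, hxk⟩ := mem_iUnion₂.1 hx
    exact ⟨k, hk, .of_segment_subset (((convex_closedBall k ε).segment_subset hxk
      (mem_closedBall_self hε.le)).trans (closedBall_subset_cthickening hk ε))⟩
  intro x hx y hy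
  obtain ⟨k, hk, hxk⟩ := exists_joinedIn x hx
  obtain ⟨l, hl, hyl⟩ := exists_joinedIn y hy
  exact hxk.trans ((((isPathConnected_thickening hKc hε).joinedIn k
    (self_subset_thickening hε K hk) l (self_subset_thickening hε K hl)).mono
    (thickening_subset_cthickening ε K)).trans hyl.symm)

lemma exists_notMem_cthickening_joinedIn_diff {F K₁ K₂ : Set E} (hF : IsConnected F)
    (h₁ : (F ∩ K₁).Nonempty) (h₂ : (F ∩ K₂).Nonempty) {ε δ : ℝ} (hε : 0 < ε) (hεδ : ε ≤ δ)
    (hK : Disjoint (cthickening δ K₁) (cthickening δ K₂)) :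
    ∃ m, m ∉ cthickening δ K₁ ∧ m ∉ cthickening δ K₂ ∧
      (∃ z ∈ cthickening ε K₁, JoinedIn (thickening ε F \ cthickening ε K₂) m z) ∧
      ∃ z ∈ cthickening ε K₂, JoinedIn (thickening ε F \ cthickening ε K₁) m z := by
  obtain ⟨x, hxF, hx⟩ := h₁
  obtain ⟨y, hyF, hy⟩ := h₂
  have hδ : 0 ≤ δ := hε.le.trans hεδ
  have mem_iff {K : Set E} {z k : E} (hk : k ∈ K) : z ∈ cthickening δ K ↔ infDist z K ≤ δ := by
    rw [mem_cthickening_iff, infDist, ENNReal.le_ofReal_iff_toReal_le (infEDist_ne_top ⟨k, hk⟩) hδ]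
  have lt_of_mem {K L : Set E} {z k l : E} (hk : k ∈ K) (hl : l ∈ L)
      (hKL : Disjoint (cthickening δ K) (cthickening δ L)) (hz : z ∈ cthickening δ K) :
      infDist z K < infDist z L :=
    ((mem_iff hk).1 hz).trans_lt (not_le.1 fun h => hKL.notMem_of_mem_left hz ((mem_iff hl).2 h))
  obtain ⟨m, hm, hm₁, hm₂⟩ := exists_zero_joinedIn_diff
    (g := fun z => infDist z K₁ - infDist z K₂)
    ((isPathConnected_thickening hF hε).joinedIn x (self_subset_thickening hε F hxF) y
      (self_subset_thickening hε F hyF))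
    (isClosed_cthickening (δ := ε) (E := K₁)) (isClosed_cthickening (δ := ε) (E := K₂))
    (self_subset_cthickening K₁ hx) (self_subset_cthickening K₂ hy) (by fun_prop)
    (fun z hz => sub_neg.2 (lt_of_mem hx hy hK (cthickening_mono hεδ K₁ hz)))
    (fun z hz => sub_pos.2 (lt_of_mem hy hx hK.symm (cthickening_mono hεδ K₂ hz)))
  exact ⟨m, fun h => (lt_of_mem hx hy hK h).ne (sub_eq_zero.1 hm),
    fun h => (lt_of_mem hy hx hK.symm h).ne' (sub_eq_zero.1 hm), hm₁, hm₂⟩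

lemma exists_joinedIn_thickening_diff_union {F K₁ K₂ P : Set E} (hF : IsConnected F)
    (h₁ : (F ∩ K₁).Nonempty) (h₂ : (F ∩ K₂).Nonempty) {ε δ : ℝ} (hε : 0 < ε) (hεδ : ε ≤ δ / 3)
    (hK : Disjoint (cthickening δ K₁) (cthickening δ K₂))
    (hFP : F ⊆ thickening (δ / 3) P) (hP : Disjoint (thickening ε F) P) :
    ∃ m, (∃ z ∈ cthickening ε K₁, JoinedIn (thickening δ F \ (cthickening ε K₂ ∪ P)) m z) ∧
      (∃ z ∈ cthickening ε K₂, JoinedIn (thickening δ F \ (cthickening ε K₁ ∪ P)) m z) ∧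
      ∃ z ∈ P, JoinedIn (thickening δ F \ (cthickening ε K₁ ∪ cthickening ε K₂)) m z := by
  obtain ⟨m, hmK₁, hmK₂, ⟨z₁, hz₁, hj₁⟩, z₂, hz₂, hj₂⟩ :=
    exists_notMem_cthickening_joinedIn_diff hF h₁ h₂ hε (by linarith) hK
  obtain ⟨x, hxF, hmx⟩ := mem_thickening_iff.1 hj₁.source_mem.1
  obtain ⟨p, hpP, hxp⟩ := mem_thickening_iff.1 (hFP hxF)
  have hmp : p ∈ ball m (2 * δ / 3) := by
    rw [mem_ball']
    linarith [dist_triangle m x p]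
  have hball_subset : ball m (2 * δ / 3) ⊆ thickening δ F := fun z hz =>
    mem_thickening_iff.2 ⟨x, hxF, by linarith [dist_triangle z m x, mem_ball.1 hz]⟩
  have hball_disjoint {K : Set E} (hmK : m ∉ cthickening δ K) :
      Disjoint (ball m (2 * δ / 3)) (cthickening ε K) := by
    refine disjoint_left.2 fun z hz hzK => hmK (thickening_subset_cthickening δ K ?_)
    exact thickening_mono (by linarith) K (thickening_cthickening_subset (2 * δ / 3) hε.le K
      (mem_thickening_iff.2 ⟨z, hzK, mem_ball'.1 hz⟩))
  have harm {K : Set E} :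
      thickening ε F \ cthickening ε K ⊆ thickening δ F \ (cthickening ε K ∪ P) :=
    fun z hz => ⟨thickening_mono (by linarith) F hz.1,
      not_or.2 ⟨hz.2, hP.notMem_of_mem_left hz.1⟩⟩
  refine ⟨m, ⟨z₁, hz₁, hj₁.mono harm⟩, ⟨z₂, hz₂, hj₂.mono harm⟩, p, hpP,
    .of_segment_subset (((convex_ball _ _).segment_subset (mem_ball_self ?_) hmp).trans ?_)⟩
  · linarith
  · exact subset_sdiff.2
      ⟨hball_subset, disjoint_union_right.2 ⟨hball_disjoint hmK₁, hball_disjoint hmK₂⟩⟩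

end NormedSpace

lemma exists_isCompact_isPathConnected_superset {Z : Type*} [TopologicalSpace Z] {U t : Set Z}
    (hU : IsPathConnected U) (ht : t.Finite) (htU : t ⊆ U) :
    ∃ P ⊆ U, IsCompact P ∧ IsPathConnected P ∧ t ⊆ P := by
  obtain ⟨o, hoU⟩ := hU.nonempty
  obtain ⟨n, p, -, rfl⟩ := ht.fin_param
  obtain ⟨γ, hγU, hγ⟩ := hU.exists_path_through_family (Fin.cons o p)
    (Fin.cases hoU fun i => htU (mem_range_self i))
  exact ⟨range γ, hγU, isCompact_range γ.continuous, isPathConnected_range γ.continuous,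
    range_subset_iff.2 fun i => by simpa using hγ i.succ⟩

lemma exists_isCompact_isPathConnected_subset_thickening {Z : Type*} [PseudoMetricSpace Z]
    {U F : Set Z} (hU : IsPathConnected U) (hF : IsCompact F) (hFU : F ⊆ closure U) {δ : ℝ}
    (hδ : 0 < δ) : ∃ P ⊆ U, IsCompact P ∧ IsPathConnected P ∧ F ⊆ thickening δ P := by
  obtain ⟨t, htU, htf, hFt⟩ := hF.elim_finite_subcover_image (b := U) (c := fun u => ball u δ)
    (fun _ _ => isOpen_ball) (thickening_eq_biUnion_ball (δ := δ) (E := U) ▸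
      hFU.trans (closure_subset_thickening hδ U))
  obtain ⟨P, hPU, hPc, hP, htP⟩ := exists_isCompact_isPathConnected_superset hU htf htU
  refine ⟨P, hPU, hPc, hP, hFt.trans ?_⟩
  rw [← thickening_eq_biUnion_ball]
  exact thickening_subset_of_subset δ htP

lemma eventually_disjoint_cthickening {Z : Type*} [PseudoEMetricSpace Z] {A B : Set Z}
    (hA : IsCompact A) (hB : IsClosed B) (hAB : Disjoint A B) :
    ∀ᶠ δ in 𝓝[>] (0 : ℝ), Disjoint (cthickening δ A) (cthickening δ B) := by
  obtain ⟨δ, hδ, h⟩ := hAB.exists_cthickenings hA hB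
  filter_upwards [Ioc_mem_nhdsGT hδ] with ε hε
  exact h.mono (cthickening_mono hε.2 A) (cthickening_mono hε.2 B)

/-- Otherwise `K₁`, `K₂`, `U` and the three sets `F i` would yield a drawing of `K₃,₃`. -/
lemma exists_disjoint_of_subcontIn_frontier {U K₁ K₂ : Set ℂ} (hU : IsPathConnected U)
    (hK₁ : SubcontIn Uᶜ K₁) (hK₂ : SubcontIn Uᶜ K₂) (hK : Disjoint K₁ K₂) {F : Fin 3 → Set ℂ}
    (hF : ∀ i, SubcontIn (closure U \ U) (F i)) (hFd : Pairwise (Disjoint on F)) :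
    ∃ i, Disjoint (F i) K₁ ∨ Disjoint (F i) K₂ := by
  by_contra! hmeet
  simp only [not_disjoint_iff_nonempty_inter] at hmeet
  obtain ⟨δ, ⟨hδK, hδF⟩, hδ⟩ : ∃ δ, (Disjoint (cthickening δ K₁) (cthickening δ K₂) ∧
      ∀ i j, i ≠ j → Disjoint (cthickening δ (F i)) (cthickening δ (F j))) ∧ 0 < δ :=
    (((eventually_disjoint_cthickening hK₁.2.1 hK₂.2.1.isClosed hK).and
      (eventually_all.2 fun i => eventually_all.2 fun j => eventually_imp_distrib_left.2 fun hij =>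
        eventually_disjoint_cthickening (hF i).2.1 (hF j).2.1.isClosed (hFd hij))).and
      self_mem_nhdsWithin).exists
  have hFc : IsCompact (⋃ i, F i) := isCompact_iUnion fun i => (hF i).2.1
  obtain ⟨P, hPU, hPc, hP, hFP⟩ := exists_isCompact_isPathConnected_subset_thickening hU hFc
    (iUnion_subset fun i => (hF i).1.trans sdiff_subset) (δ := δ / 3) (by positivity)
  have hdisj : Disjoint (K₁ ∪ K₂ ∪ ⋃ i, F i) P :=
    (disjoint_compl_left.mono_left (union_subset (union_subset hK₁.1 hK₂.1)
      (iUnion_subset fun i => (hF i).1.trans fun _ h => h.2))).mono_right hPU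
  obtain ⟨ε, ⟨hεP, -, hεδ⟩, hε⟩ := ((eventually_disjoint_cthickening
    ((hK₁.2.1.union hK₂.2.1).union hFc) hPc.isClosed hdisj).and
    (Ioc_mem_nhdsGT (show 0 < δ / 3 by positivity))).and self_mem_nhdsWithin |>.exists
  have hεP {A : Set ℂ} (hA : A ⊆ K₁ ∪ K₂ ∪ ⋃ i, F i) : Disjoint (cthickening ε A) P :=
    hεP.mono (cthickening_subset_of_subset ε hA) (self_subset_cthickening P)
  choose m hm₁ hm₂ hm₃ using fun i => exists_joinedIn_thickening_diff_union (hF i).2.2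
    (hmeet i).1 (hmeet i).2 hε hεδ hδK ((subset_iUnion F i).trans hFP)
    ((hεP ((subset_iUnion F i).trans subset_union_right)).mono_left
      (thickening_subset_cthickening ε (F i)))
  have hV₀₁ : Disjoint (cthickening ε K₁) (cthickening ε K₂) :=
    hδK.mono (cthickening_mono (by linarith) K₁) (cthickening_mono (by linarith) K₂)
  have hV₀₂ := hεP (A := K₁) (subset_union_left.trans subset_union_left)
  have hV₁₂ := hεP (A := K₂) (subset_union_right.trans subset_union_left)
  exact not_forall_joinedIn_diff_union hV₀₁ hV₀₂ hV₁₂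
    (isPathConnected_cthickening hK₁.2.1 hK₁.2.2 hε)
    (isPathConnected_cthickening hK₂.2.1 hK₂.2.2 hε) hP (fun i j hij => (hδF i j hij).mono
      (thickening_subset_cthickening δ _) (thickening_subset_cthickening δ _)) m
    fun i => ⟨hm₁ i, hm₂ i, hm₃ i⟩

/-! ### Continua in finitely Suslinian spaces -/

lemma exists_isClopen_subset_of_connectedComponent_subset {Z : Type*} [TopologicalSpace Z]
    [CompactSpace Z] [T2Space Z] {x : Z} {O : Set Z} (hO : IsOpen O)
    (hx : connectedComponent x ⊆ O) : ∃ V ⊆ O, IsClopen V ∧ x ∈ V := by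
  have : Nonempty {s : Set Z // IsClopen s ∧ x ∈ s} := ⟨⟨univ, isClopen_univ, mem_univ _⟩⟩
  have hdir : Directed (· ⊇ ·) fun s : {s : Set Z // IsClopen s ∧ x ∈ s} => s.1 :=
    fun ⟨s, hs, hxs⟩ ⟨t, ht, hxt⟩ =>
      ⟨⟨s ∩ t, hs.inter ht, hxs, hxt⟩, inter_subset_left, inter_subset_right⟩
  obtain ⟨⟨V, hV, hxV⟩, hVO⟩ := exists_subset_nhds_of_isCompact hdir
    (fun s => s.2.1.isClosed.isCompact) fun z hz =>
      hO.mem_nhds (hx ((connectedComponent_eq_iInter_isClopen x).ge hz))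
  exact ⟨V, hVO, hV, hxV⟩

lemma not_connectedComponentIn_closure_subset {Z : Type*} [TopologicalSpace Z] [CompactSpace Z]
    [T2Space Z] [PreconnectedSpace Z] {O : Set Z} (hO : IsOpen O) (hne : O ≠ univ) {x : Z}
    (hx : x ∈ O) : ¬ connectedComponentIn (closure O) x ⊆ O := by
  intro hsub
  have hxcl : x ∈ closure O := subset_closure hx
  have : CompactSpace (closure O) := isCompact_iff_compactSpace.1 isClosed_closure.isCompact
  rw [connectedComponentIn_eq_image hxcl, image_subset_iff] at hsub
  obtain ⟨V, hVO, hV, hxV⟩ := exists_isClopen_subset_of_connectedComponent_subset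
    (hO.preimage continuous_subtype_val) hsub
  have hVclosed : IsClosed (Subtype.val '' V) :=
    isClosed_closure.isClosedEmbedding_subtypeVal.isClosedMap V hV.isClosed
  have hVopen : IsOpen (Subtype.val '' V) := by
    obtain ⟨W, hW, rfl⟩ := isOpen_induced_iff.1 hV.isOpen
    rw [Subtype.image_preimage_coe]
    convert hO.inter hW using 1
    exact (subset_inter (fun z hz => hVO (a := ⟨z, hz.1⟩) hz.2) inter_subset_right).antisymm
      (inter_subset_inter_left W subset_closure)
  have hVuniv : Subtype.val '' V = univ :=
    IsClopen.eq_univ ⟨hVclosed, hVopen⟩ ⟨x, ⟨x, hxcl⟩, hxV, rfl⟩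
  exact hne (univ_subset_iff.1 (hVuniv ▸ image_subset_iff.2 hVO))

lemma isClosed_connectedComponentIn {Z : Type*} [TopologicalSpace Z] {S : Set Z}
    (hS : IsClosed S) (x : Z) : IsClosed (connectedComponentIn S x) := by
  by_cases hx : x ∈ S
  · exact isClosed_of_closure_subset <|
      isPreconnected_connectedComponentIn.closure.subset_connectedComponentIn
        (subset_closure (mem_connectedComponentIn hx))
        (closure_minimal (connectedComponentIn_subset S x) hS)
  · simp [connectedComponentIn_eq_empty hx]

lemma SubcontIn.mono {Z : Type*} [MetricSpace Z] {S T C : Set Z} (h : SubcontIn S C)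
    (hST : S ⊆ T) : SubcontIn T C :=
  ⟨h.1.trans hST, h.2⟩

lemma SubcontIn.image {Z Z' : Type*} [MetricSpace Z] [MetricSpace Z'] {S C : Set Z}
    (h : SubcontIn S C) {f : Z → Z'} (hf : Continuous f) : SubcontIn (f '' S) (f '' C) :=
  ⟨image_mono h.1, h.2.1.image hf, h.2.2.image f hf.continuousOn⟩

lemma subcontIn_connectedComponentIn {Z : Type*} [MetricSpace Z] {S : Set Z} (hS : IsCompact S)
    {x : Z} (hx : x ∈ S) : SubcontIn S (connectedComponentIn S x) :=
  ⟨connectedComponentIn_subset S x, hS.of_isClosed_subset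
    (isClosed_connectedComponentIn hS.isClosed x) (connectedComponentIn_subset S x),
    isConnected_connectedComponentIn_iff.2 hx⟩

lemma SubcontIn.exists_subcontIn_closedBall {Z : Type*} [MetricSpace Z] {S A : Set Z}
    (hA : SubcontIn S A) {a : Z} {r s : ℝ} (hrs : r ≤ s) (hnear : (A ∩ ball a r).Nonempty)
    (hfar : ¬ A ⊆ ball a s) : ∃ B, SubcontIn (A ∩ closedBall a s) B ∧ s - r ≤ diam B := by
  obtain ⟨p, hpA, hpa⟩ := hnear
  have : CompactSpace A := isCompact_iff_compactSpace.1 hA.2.1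
  have : PreconnectedSpace A := Subtype.preconnectedSpace hA.2.2.isPreconnected
  let O : Set A := Subtype.val ⁻¹' ball a s
  have hpO : ⟨p, hpA⟩ ∈ O := ball_subset_ball hrs hpa
  have hO : IsOpen O := isOpen_ball.preimage continuous_subtype_val
  have hOne : O ≠ univ := fun h => hfar fun z hz => h.ge (mem_univ (⟨z, hz⟩ : A))
  obtain ⟨q, hqB, hqO⟩ := not_subset.1 (not_connectedComponentIn_closure_subset hO hOne hpO)
  have hB := (subcontIn_connectedComponentIn isClosed_closure.isCompact
    (subset_closure hpO)).image continuous_subtype_val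
  refine ⟨_, hB.mono ?_, ?_⟩
  · rintro _ ⟨z, hz, rfl⟩
    exact ⟨z.2, closure_minimal (preimage_mono ball_subset_closedBall)
      (isClosed_closedBall.preimage continuous_subtype_val) hz⟩
  · calc s - r ≤ dist (q : Z) a - dist p a := sub_le_sub (not_lt.1 hqO) (mem_ball.1 hpa).le
      _ ≤ dist (q : Z) p := by linarith [dist_triangle (q : Z) p a]
      _ ≤ _ := dist_le_diam_of_mem hB.2.1.isBounded (mem_image_of_mem _ hqB)
        (mem_image_of_mem _ (mem_connectedComponentIn (subset_closure hpO)))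

lemma exists_infinite_setOf_inter_nonempty {ι Z : Type*} {B : ι → Set Z} {N : Set ι}
    (hN : N.Infinite) (hB : ∀ M ⊆ N, M.PairwiseDisjoint B → M.Finite) :
    ∃ m ∈ N, {n ∈ N | (B n ∩ B m).Nonempty}.Infinite := by
  by_contra! hfin
  have : Std.Symm fun m n => m ≠ n ∧ Disjoint (B m) (B n) := ⟨fun _ _ h => ⟨h.1.symm, h.2.symm⟩⟩
  obtain ⟨f, hfN, hf⟩ := exists_seq_of_forall_finset_exists' (· ∈ N)
    (fun m n => m ≠ n ∧ Disjoint (B m) (B n)) fun s hs => by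
      obtain ⟨n, hn, hns⟩ := (hN.sdiff (s.finite_toSet.union
        (s.finite_toSet.biUnion fun m hm => hfin m (hs m hm)))).nonempty
      refine ⟨n, hn, fun m hm => ⟨?_, ?_⟩⟩
      · rintro rfl
        exact hns (.inl hm)
      · by_contra hmn
        rw [disjoint_comm, not_disjoint_iff_nonempty_inter] at hmn
        exact hns (.inr (mem_biUnion (Finset.mem_coe.2 hm) ⟨hn, hmn⟩))
  refine infinite_range_of_injective (injective_iff_pairwise_ne.2 fun _ _ h => (hf h).1)
    (hB (range f) (range_subset_iff.2 hfN) ?_)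
  rintro _ ⟨i, rfl⟩ _ ⟨j, rfl⟩ hij
  exact (hf fun h => hij (congrArg f h)).2

lemma FinSus.finite_of_pairwiseDisjoint {Y : Type*} [MetricSpace Y] (hY : FinSus Y) {ι : Type*}
    {M : Set ι} {B : ι → Set Y} {ε : ℝ} (hε : 0 < ε)
    (hB : ∀ n ∈ M, IsCompact (B n) ∧ IsConnected (B n) ∧ ε ≤ diam (B n))
    (hM : M.PairwiseDisjoint B) : M.Finite := by
  have hinj : InjOn B M := fun m hm n hn h => hM.elim hm hn fun hd => by
    obtain ⟨z, hz⟩ := (hB m hm).2.1.nonempty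
    exact disjoint_left.1 hd hz (h ▸ hz)
  refine Finite.of_finite_image (hY ε hε (B '' M) (forall_mem_image.2 hB) ?_) hinj
  exact hinj.pairwiseDisjoint_image.2 hM

lemma FinSus.exists_subcontIn_closedBall {Y : Type*} [MetricSpace Y] (hY : FinSus Y) {ι : Type*}
    {N : Set ι} (hN : N.Infinite) {S : Set Y} {A : ι → Set Y} (hA : ∀ n ∈ N, SubcontIn S (A n))
    {a : Y} {r s : ℝ} (hrs : r < s) (hnear : ∀ n ∈ N, (A n ∩ ball a r).Nonempty)
    (hfar : ∀ n ∈ N, ¬ A n ⊆ ball a s) :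
    ∃ Z, SubcontIn (closedBall a s) Z ∧ {n ∈ N | (A n ∩ Z).Nonempty}.Infinite := by
  choose! B hB hBd using fun n hn =>
    (hA n hn).exists_subcontIn_closedBall hrs.le (hnear n hn) (hfar n hn)
  obtain ⟨m, hm, hinf⟩ := exists_infinite_setOf_inter_nonempty hN fun M hMN hM =>
    hY.finite_of_pairwiseDisjoint (sub_pos.2 hrs)
      (fun n hn => ⟨(hB n (hMN hn)).2.1, (hB n (hMN hn)).2.2, hBd n (hMN hn)⟩) hM
  refine ⟨B m, (hB m hm).mono inter_subset_right, hinf.mono fun n hn => ⟨hn.1, ?_⟩⟩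
  exact hn.2.mono (inter_subset_inter_left _ ((hB n hn.1).1.trans inter_subset_left))

/-! ### Finitely monotone maps and limit continua -/

/-- A map is finitely monotone if the preimage of every continuum has finitely many connected
components. -/
def FinitelyMonotone {X Y : Type*} [TopologicalSpace X] [TopologicalSpace Y] (φ : X → Y) : Prop :=
  ∀ Z : Set Y, IsCompact Z → IsConnected Z →
    {T : Set X | ∃ x ∈ φ ⁻¹' Z, T = connectedComponentIn (φ ⁻¹' Z) x}.Finite

lemma exists_infinite_setOf_inter_connectedComponentIn_nonempty {X ι : Type*} [TopologicalSpace X]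
    {S : Set X} (hS : {T | ∃ x ∈ S, T = connectedComponentIn S x}.Finite) {G : ι → Set X}
    {N : Set ι} (hN : N.Infinite) (hG : ∀ n ∈ N, (G n ∩ S).Nonempty) :
    ∃ x ∈ S, {n ∈ N | (G n ∩ connectedComponentIn S x).Nonempty}.Infinite := by
  by_contra! h
  refine hN ((hS.biUnion (t := fun T => {n ∈ N | (G n ∩ T).Nonempty}) ?_).subset fun n hn => ?_)
  · rintro _ ⟨x, hx, rfl⟩
    exact h x hx
  · obtain ⟨x, hxG, hxS⟩ := hG n hn
    exact mem_biUnion (x := connectedComponentIn S x) ⟨x, hxS, rfl⟩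
      ⟨hn, x, hxG, mem_connectedComponentIn hxS⟩

lemma FinitelyMonotone.exists_subcontIn_preimage_closedBall {X Y ι : Type*} [MetricSpace X]
    [CompactSpace X] [MetricSpace Y] (hY : FinSus Y) {φ : X → Y} (hφc : Continuous φ)
    (hφ : FinitelyMonotone φ) {N : Set ι} (hN : N.Infinite) {G : ι → Set X}
    (hG : ∀ n, SubcontIn univ (G n)) {a : Y} {r s : ℝ} (hrs : r < s)
    (hnear : ∀ n ∈ N, (G n ∩ φ ⁻¹' ball a r).Nonempty)
    (hfar : ∀ n ∈ N, ¬ G n ⊆ φ ⁻¹' ball a s) :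
    ∃ K, SubcontIn (φ ⁻¹' closedBall a s) K ∧ {n ∈ N | (G n ∩ K).Nonempty}.Infinite := by
  obtain ⟨Z, hZ, hinf⟩ := hY.exists_subcontIn_closedBall (A := fun n => φ '' G n) hN
    (fun n _ => (hG n).image hφc) hrs (fun n hn => image_inter_nonempty_iff.2 (hnear n hn))
    fun n hn => image_subset_iff.not.2 (hfar n hn)
  obtain ⟨x, hx, hinf⟩ := exists_infinite_setOf_inter_connectedComponentIn_nonempty
    (hφ Z hZ.2.1 hZ.2.2) hinf fun n hn => image_inter_nonempty_iff.1 hn.2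
  have hZc : IsCompact (φ ⁻¹' Z) := (hZ.2.1.isClosed.preimage hφc).isCompact
  exact ⟨_, (subcontIn_connectedComponentIn hZc hx).mono (preimage_mono hZ.1),
    hinf.mono fun n hn => ⟨hn.1.1, hn.2⟩⟩

lemma eventually_inter_nonempty_of_tendsto_hausdorffEDist {Z κ : Type*} [PseudoEMetricSpace Z]
    {l : Filter κ} {F : κ → Set Z} {C O : Set Z}
    (hF : Tendsto (fun n => hausdorffEDist (F n) C) l (𝓝 0)) (hO : IsOpen O)
    (hCO : (C ∩ O).Nonempty) : ∀ᶠ n in l, (F n ∩ O).Nonempty := by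
  obtain ⟨x, hxC, hxO⟩ := hCO
  obtain ⟨ε, hε, hεO⟩ := EMetric.isOpen_iff.1 hO x hxO
  filter_upwards [hF.eventually_lt_const hε] with n hn
  obtain ⟨y, hy, hxy⟩ := exists_edist_lt_of_hausdorffEDist_lt hxC (hausdorffEDist_comm.trans_lt hn)
  exact ⟨y, hy, hεO (by rwa [edist_comm] at hxy)⟩

lemma IsLimCont.exists_disjoint_subcontIn_inter_nonempty {X Y : Type*} [MetricSpace X]
    [CompactSpace X] [MetricSpace Y] (hY : FinSus Y) {φ : X → Y} (hφc : Continuous φ)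
    (hφ : FinitelyMonotone φ) {C : Set X} (hC : IsLimCont C) {x x' : X} (hx : x ∈ C)
    (hx' : x' ∈ C) (hne : φ x ≠ φ x') :
    ∃ K₁ K₂ : Set X, SubcontIn univ K₁ ∧ SubcontIn univ K₂ ∧ Disjoint K₁ K₂ ∧
      ∃ G : ℕ → Set X, (∀ n, SubcontIn univ (G n)) ∧ Pairwise (Disjoint on G) ∧
        ∀ n, (G n ∩ K₁).Nonempty ∧ (G n ∩ K₂).Nonempty := by
  obtain ⟨-, -, F, hF, hFd, hFC⟩ := hC
  obtain ⟨r, hr⟩ : ∃ r, dist (φ x) (φ x') = 5 * r := ⟨dist (φ x) (φ x') / 5, by ring⟩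
  have hr' : dist (φ x') (φ x) = 5 * r := by rw [dist_comm, hr]
  have hr0 : 0 < r := by linarith [dist_pos.2 hne]
  have hFcont (n) : SubcontIn univ (F n) := ⟨subset_univ _, hF n⟩
  have near {y : X} (hy : y ∈ C) : ∀ᶠ n in atTop, (F n ∩ φ ⁻¹' ball (φ y) r).Nonempty :=
    eventually_inter_nonempty_of_tendsto_hausdorffEDist hFC (isOpen_ball.preimage hφc)
      ⟨y, hy, mem_ball_self (x := φ y) hr0⟩
  have far {n : ℕ} {y y' : X} (hd : dist (φ y) (φ y') = 5 * r)
      (hn : (F n ∩ φ ⁻¹' ball (φ y') r).Nonempty) : ¬ F n ⊆ φ ⁻¹' ball (φ y) (2 * r) := by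
    obtain ⟨z, hz, hzy'⟩ := hn
    intro h
    linarith [dist_triangle_left (φ y) (φ y') (φ z), mem_ball.1 (h hz), mem_ball.1 hzy']
  obtain ⟨K₁, hK₁, hinf₁⟩ := hφ.exists_subcontIn_preimage_closedBall hY hφc
    (Nat.frequently_atTop_iff_infinite.1 ((near hx).and (near hx')).frequently) hFcont
    (show r < 2 * r by linarith) (fun n hn => hn.1) fun n hn => far hr hn.2
  obtain ⟨K₂, hK₂, hinf₂⟩ := hφ.exists_subcontIn_preimage_closedBall hY hφc hinf₁ hFcont
    (show r < 2 * r by linarith) (fun n hn => hn.1.2) fun n hn => far hr' hn.1.1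
  refine ⟨K₁, K₂, hK₁.mono (subset_univ _), hK₂.mono (subset_univ _), ?_,
    fun i => F (hinf₂.natEmbedding _ i), fun i => hFcont _,
    hFd.comp_of_injective (Subtype.val_injective.comp (hinf₂.natEmbedding _).injective),
    fun i => ⟨(hinf₂.natEmbedding _ i).2.1.2, (hinf₂.natEmbedding _ i).2.2⟩⟩
  exact ((closedBall_disjoint_closedBall (by linarith)).preimage φ).mono hK₁.1 hK₂.1

lemma SubcontIn.preimage_val {Z : Type*} [MetricSpace Z] {S C : Set Z} (h : SubcontIn S C) :
    SubcontIn univ (Subtype.val ⁻¹' C : Set S) := by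
  have hS : C ⊆ range (Subtype.val : S → Z) := Subtype.range_val ▸ h.1
  exact ⟨subset_univ _, IsInducing.subtypeVal.isCompact_preimage' h.2.1 hS,
    h.2.2.nonempty.preimage' hS, (IsInducing.subtypeVal.isPreconnected_image).1
      (by rw [image_preimage_eq_of_subset hS]; exact h.2.2.isPreconnected)⟩

lemma LimContIn.isLimCont_preimage_val {Z : Type*} [MetricSpace Z] {S C : Set Z}
    (h : LimContIn S C) : IsLimCont (Subtype.val ⁻¹' C : Set S) := by
  obtain ⟨hC, F, hF, hFd, hFC⟩ := h
  refine ⟨hC.preimage_val.2.1, hC.preimage_val.2.2, fun n => Subtype.val ⁻¹' F n,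
    fun n => (hF n).preimage_val.2, fun i j hij => (hFd hij).preimage _, hFC.congr fun n => ?_⟩
  have image_preimage {T : Set Z} (hT : SubcontIn S T) :
      Subtype.val '' (Subtype.val ⁻¹' T : Set S) = T := by
    rw [Subtype.image_preimage_coe, inter_eq_right.2 hT.1]
  conv_lhs => rw [← image_preimage hC, ← image_preimage (hF n)]
  exact hausdorffEDist_image isometry_subtype_coe

/-! ### Unshielded compacta -/

lemma exists_not_isBounded_connectedComponentIn_compl {E : Type*} [NormedAddCommGroup E]
    [NormedSpace ℝ E] [Nontrivial E] {X : Set E} (hX : Bornology.IsBounded X) :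
    ∃ z ∉ X, ¬ Bornology.IsBounded (connectedComponentIn Xᶜ z) := by
  obtain ⟨v, hv⟩ := exists_norm_eq E zero_le_one
  obtain ⟨R, hR0, hXR⟩ := hX.subset_closedBall_lt 0 0
  have norm_smul_of_mem {t : ℝ} (ht : t ∈ Ioi R) : ‖t • v‖ = t := by
    rw [norm_smul, hv, mul_one, Real.norm_of_nonneg (hR0.trans ht).le]
  have hray : (fun t : ℝ => t • v) '' Ioi R ⊆ Xᶜ := by
    rintro _ ⟨t, ht, rfl⟩ htX
    have := mem_closedBall_zero_iff.1 (hXR htX)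
    rw [norm_smul_of_mem ht] at this
    exact (not_le.2 ht) this
  have hmem : (R + 1) • v ∈ (fun t : ℝ => t • v) '' Ioi R := ⟨R + 1, lt_add_one R, rfl⟩
  refine ⟨(R + 1) • v, hray hmem, fun hb => ?_⟩
  obtain ⟨M, hRM, hM⟩ := (hb.subset ((isPreconnected_Ioi.image _
    (by fun_prop)).subset_connectedComponentIn hmem hray)).subset_closedBall_lt R 0
  have := mem_closedBall_zero_iff.1 (hM ⟨M + 1, hRM.trans (lt_add_one M), rfl⟩)
  rw [norm_smul_of_mem (hRM.trans (lt_add_one M))] at this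
  exact (lt_add_one M).not_ge this

lemma Unshielded.exists_isPathConnected {X : Set ℂ} (hXu : Unshielded X) (hX : IsCompact X) :
    ∃ U : Set ℂ, IsPathConnected U ∧ X ⊆ closure U \ U := by
  obtain ⟨z, hz, hunb⟩ := exists_not_isBounded_connectedComponentIn_compl hX.isBounded
  have hU : IsOpen (connectedComponentIn Xᶜ z) :=
    hX.isClosed.isOpen_compl.connectedComponentIn
  refine ⟨connectedComponentIn Xᶜ z, hU.isConnected_iff_isPathConnected.1
    (isConnected_connectedComponentIn_iff.2 hz), ?_⟩
  rw [← hU.frontier_eq]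
  exact (hXu z hz hunb).le

theorem finitely_monotone_collapses_limit_continua_general {X U : Set ℂ} (hX : IsCompact X)
    (hU : IsPathConnected U) (hXU : X ⊆ closure U \ U) {Y : Type*} [MetricSpace Y] (hY : FinSus Y)
    {φ : X → Y} (hφc : Continuous φ) (hφ : FinitelyMonotone φ) {C : Set ℂ} (hC : LimContIn X C) :
    ∃ y : Y, ∀ x : X, (x : ℂ) ∈ C → φ x = y := by
  have := isCompact_iff_compactSpace.1 hX
  obtain ⟨c, hc⟩ := hC.1.2.2.nonempty
  refine ⟨φ ⟨c, hC.1.1 hc⟩, fun x hx => ?_⟩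
  by_contra hne
  obtain ⟨K₁, K₂, hK₁, hK₂, hK, G, hG, hGd, hGK⟩ :=
    hC.isLimCont_preimage_val.exists_disjoint_subcontIn_inter_nonempty hY hφc hφ hx hc hne
  have image_val {K : Set X} (h : SubcontIn univ K) :
      SubcontIn (closure U \ U) (Subtype.val '' K) :=
    (h.image continuous_subtype_val).mono (by simpa)
  obtain ⟨i, hi⟩ := exists_disjoint_of_subcontIn_frontier hU
    ((image_val hK₁).mono fun _ h => h.2) ((image_val hK₂).mono fun _ h => h.2)
    ((disjoint_image_iff Subtype.val_injective).2 hK) (fun i : Fin 3 => image_val (hG i))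
    fun i j hij => (disjoint_image_iff Subtype.val_injective).2
      (hGd (Fin.val_injective.ne hij))
  rw [disjoint_image_iff Subtype.val_injective, disjoint_image_iff Subtype.val_injective] at hi
  exact hi.elim (not_disjoint_iff_nonempty_inter.2 (hGK i).1)
    (not_disjoint_iff_nonempty_inter.2 (hGK i).2)

/-- a finitely monotone continuous surjection from an unshielded planar
compactum onto a finitely Suslinian compactum collapses every limit continuum to a point. -/
theorem finitely_monotone_collapses_limit_continua
    (X : Set ℂ) (hXc : IsCompact X) (hXu : Unshielded X)
    {Y : Type*} [MetricSpace Y] [CompactSpace Y] (hY : FinSus Y)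
    (φ : X → Y) (hφc : Continuous φ) (hφs : Function.Surjective φ)
    (hφfm : ∀ Z : Set Y, IsCompact Z → IsConnected Z →
      {T : Set X | ∃ x ∈ φ ⁻¹' Z, T = connectedComponentIn (φ ⁻¹' Z) x}.Finite)
    (C : Set ℂ) (hC : LimContIn X C) :
    ∃ y : Y, ∀ x : X, (x : ℂ) ∈ C → φ x = y := by
  obtain ⟨U, hU, hXU⟩ := hXu.exists_isPathConnected hXc
  exact finitely_monotone_collapses_limit_continua_general hXc hU hXU hY hφc hφfm hC
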